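/- arXiv:1606.01819 — 7 statements merged into one kernel-verified Lean document; each statement's English description precedes it below -/
import Mathlib

section
/- For every t ∈ ℝ, the functions x and y are twice differentiable at t and satisfy the Newtonian two-body equations x''(t) = (G m₂ / ‖y(t) − x(t)‖³) (y(t) − x(t)) and y''(t) = (G m₁ / ‖x(t) − y(t)‖³) (x(t) − y(t)), where ‖·‖ denotes the Euclidean norm on ℝ². -/
open Real

theorem hasDerivAt_eucl {z : ℝ → EuclideanSpace ℝ (Fin 2)} {z' : EuclideanSpace ℝ (Fin 2)}
    {t : ℝ} : HasDerivAt z z' t ↔ ∀ i, HasDerivAt (fun s => z s i) (z' i) t := by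
  constructor
  · intro h i
    exact ((EuclideanSpace.proj i : EuclideanSpace ℝ (Fin 2) →L[ℝ] ℝ).hasFDerivAt).comp_hasDerivAt t h
  · intro h
    have h2 := hasDerivAt_pi.2 h
    exact (((EuclideanSpace.equiv (Fin 2) ℝ).symm :
      (Fin 2 → ℝ) →L[ℝ] EuclideanSpace ℝ (Fin 2)).hasFDerivAt).comp_hasDerivAt t h2

/-- Newtonian two-body equations for the explicit elliptic solution:
for every `t`, `x` and `y` are twice differentiable at `t` and satisfy
`x'' = (G m₂ / ‖y - x‖³) (y - x)` and `y'' = (G m₁ / ‖x - y‖³) (x - y)`. -/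
theorem two_body_equations
    (G r₀ m₁ m₂ e : ℝ) (hG : 0 < G) (hr₀ : 0 < r₀) (hm₁ : 0 < m₁) (hm₂ : 0 < m₂)
    (he₀ : 0 < e) (he₁ : e < 1)
    (c μ : ℝ)
    (hc : c = Real.sqrt (G * (m₁ + m₂) / ((1 - e) ^ 3 * r₀ ^ 3)))
    (hμ : μ = m₂ / (m₁ + m₂))
    (θ : ℝ → ℝ) (hθdiff : Differentiable ℝ θ)
    (hθ' : ∀ t, deriv θ t = c * (1 - e * Real.cos (θ t)) ^ 2)
    (hθ0 : θ 0 = 0)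
    (x y : ℝ → EuclideanSpace ℝ (Fin 2))
    (hx : ∀ t, x t =
      (-((1 - e) * μ * r₀ / (1 - e * Real.cos (θ t)))) • ![Real.cos (θ t), Real.sin (θ t)])
    (hy : ∀ t, y t =
      ((1 - e) * (1 - μ) * r₀ / (1 - e * Real.cos (θ t))) • ![Real.cos (θ t), Real.sin (θ t)]) :
    ∀ t : ℝ,
      DifferentiableAt ℝ x t ∧ DifferentiableAt ℝ (deriv x) t ∧
      DifferentiableAt ℝ y t ∧ DifferentiableAt ℝ (deriv y) t ∧
      deriv (deriv x) t = (G * m₂ / ‖y t - x t‖ ^ 3) • (y t - x t) ∧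
      deriv (deriv y) t = (G * m₁ / ‖x t - y t‖ ^ 3) • (x t - y t) := by
  have hD : ∀ t, 0 < 1 - e * Real.cos (θ t) := fun t => by
    nlinarith [Real.cos_le_one (θ t)]
  have hθd : ∀ t, HasDerivAt θ (c * (1 - e * Real.cos (θ t)) ^ 2) t := fun t => by
    rw [← hθ' t]; exact (hθdiff t).hasDerivAt
  have hcos := fun t => (hθd t).cos
  have hsin := fun t => (hθd t).sin
  have hE := fun t => ((hcos t).const_mul e).const_sub 1
  have main : ∀ (k : ℝ) (z : ℝ → EuclideanSpace ℝ (Fin 2)),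
      (∀ t, z t 0 = k * (Real.cos (θ t) / (1 - e * Real.cos (θ t)))) →
      (∀ t, z t 1 = k * (Real.sin (θ t) / (1 - e * Real.cos (θ t)))) →
      ∀ t, DifferentiableAt ℝ z t ∧ DifferentiableAt ℝ (deriv z) t ∧
        deriv (deriv z) t = (-(c ^ 2 * (1 - e * Real.cos (θ t)) ^ 3)) • z t := by
    intro k z h0 h1
    have d1 : ∀ t, HasDerivAt z
        (WithLp.toLp 2 ![k * (-c * Real.sin (θ t)), k * (c * (Real.cos (θ t) - e))]) t := by
      intro t
      rw [hasDerivAt_eucl]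
      have hne := (hD t).ne'
      rw [Fin.forall_fin_two]
      constructor
      · rw [show (fun s => z s 0) = _ from funext h0]
        refine (((hcos t).fun_div (hE t) (hD t).ne').const_mul k).congr_deriv ?_
        simp only [Matrix.cons_val_zero]
        field_simp
        ring
      · rw [show (fun s => z s 1) = _ from funext h1]
        refine (((hsin t).fun_div (hE t) (hD t).ne').const_mul k).congr_deriv ?_
        simp only [Matrix.cons_val_one, Matrix.cons_val_fin_one]
        have h2 := Real.sin_sq_add_cos_sq (θ t)
        generalize hDe : 1 - e * Real.cos (θ t) = D at hne ⊢
        field_simp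
        subst hDe
        linear_combination (-k * c * e) * h2
    have e1 : deriv z = fun t =>
        WithLp.toLp 2 ![k * (-c * Real.sin (θ t)), k * (c * (Real.cos (θ t) - e))] :=
      funext fun t => (d1 t).deriv
    have d2 : ∀ t, HasDerivAt (deriv z)
        ((-(c ^ 2 * (1 - e * Real.cos (θ t)) ^ 3)) • z t) t := by
      intro t
      rw [e1, hasDerivAt_eucl]
      have hne := (hD t).ne'
      rw [Fin.forall_fin_two]
      constructor
      · refine (((hsin t).const_mul (-c)).const_mul k).congr_deriv ?_
        simp only [PiLp.smul_apply, h0, smul_eq_mul]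
        field_simp
      · refine ((((hcos t).sub_const e).const_mul c).const_mul k).congr_deriv ?_
        simp only [PiLp.smul_apply, h1, smul_eq_mul]
        field_simp
    intro t
    exact ⟨(d1 t).differentiableAt, (d2 t).differentiableAt, (d2 t).deriv⟩
  have hx0 : ∀ t, x t 0 = (-((1 - e) * μ * r₀)) * (Real.cos (θ t) / (1 - e * Real.cos (θ t))) := by
    intro t
    have := congrFun (hx t) 0
    simp at this
    rw [this]; ring
  have hx1 : ∀ t, x t 1 = (-((1 - e) * μ * r₀)) * (Real.sin (θ t) / (1 - e * Real.cos (θ t))) := by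
    intro t
    have := congrFun (hx t) 1
    simp at this
    rw [this]; ring
  have hy0 : ∀ t, y t 0 = ((1 - e) * (1 - μ) * r₀) * (Real.cos (θ t) / (1 - e * Real.cos (θ t))) := by
    intro t
    have := congrFun (hy t) 0
    simp at this
    rw [this]; ring
  have hy1 : ∀ t, y t 1 = ((1 - e) * (1 - μ) * r₀) * (Real.sin (θ t) / (1 - e * Real.cos (θ t))) := by
    intro t
    have := congrFun (hy t) 1
    simp at this
    rw [this]; ring
  intro t
  obtain ⟨a1, a2, a3⟩ := main _ x hx0 hx1 t
  obtain ⟨b1, b2, b3⟩ := main _ y hy0 hy1 t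
  have h1e : 0 < 1 - e := by linarith
  have hM : 0 < m₁ + m₂ := by linarith
  have hDt := hD t
  have hn : ‖y t - x t‖ = (1 - e) * r₀ / (1 - e * Real.cos (θ t)) := by
    rw [EuclideanSpace.norm_eq, Real.sqrt_eq_iff_mul_self_eq (by positivity) (by positivity)]
    simp [Fin.sum_univ_two, hx0, hx1, hy0, hy1]
    field_simp
    have h2 := Real.sin_sq_add_cos_sq (θ t)
    linear_combination h2
  have hn' : ‖x t - y t‖ = (1 - e) * r₀ / (1 - e * Real.cos (θ t)) := by
    rw [norm_sub_rev, hn]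
  have hc2 : c ^ 2 = G * (m₁ + m₂) / ((1 - e) ^ 3 * r₀ ^ 3) := by
    rw [hc, Real.sq_sqrt (by positivity)]
  refine ⟨a1, a2, b1, b2, ?_, ?_⟩
  · rw [a3, hn, hc2]
    ext i
    fin_cases i <;> simp [hx0, hx1, hy0, hy1, hμ] <;> field_simp <;> ring
  · rw [b3, hn', hc2]
    ext i
    fin_cases i <;> simp [hx0, hx1, hy0, hy1, hμ] <;> field_simp <;> ring
end

section
/- For every t ∈ ℝ one has (1−e) r₀/(1+e) ≤ ‖x(t) − y(t)‖ ≤ r₀, and the maximum distance r₀ is attained at t = 0, i.e. ‖x(0) − y(0)‖ = r₀. (Here ‖·‖ denotes the Euclidean norm on ℝ².) -/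
open Real

theorem two_body_distance_bounds
    (G r₀ m₁ m₂ e : ℝ) (hG : 0 < G) (hr₀ : 0 < r₀) (hm₁ : 0 < m₁) (hm₂ : 0 < m₂)
    (he₀ : 0 < e) (he₁ : e < 1)
    (c μ : ℝ)
    (hc : c = Real.sqrt (G * (m₁ + m₂) / ((1 - e) ^ 3 * r₀ ^ 3)))
    (hμ : μ = m₂ / (m₁ + m₂))
    (θ : ℝ → ℝ) (hθdiff : Differentiable ℝ θ)
    (hθ' : ∀ t, deriv θ t = c * (1 - e * Real.cos (θ t)) ^ 2)
    (hθ0 : θ 0 = 0)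
    (x y : ℝ → EuclideanSpace ℝ (Fin 2))
    (hx : ∀ t, x t =
      (-((1 - e) * μ * r₀ / (1 - e * Real.cos (θ t)))) • ![Real.cos (θ t), Real.sin (θ t)])
    (hy : ∀ t, y t =
      ((1 - e) * (1 - μ) * r₀ / (1 - e * Real.cos (θ t))) • ![Real.cos (θ t), Real.sin (θ t)]) :
    (∀ t : ℝ, (1 - e) * r₀ / (1 + e) ≤ ‖x t - y t‖ ∧ ‖x t - y t‖ ≤ r₀) ∧
    ‖x 0 - y 0‖ = r₀ := by
  have key : ∀ t, ‖x t - y t‖ = (1 - e) * r₀ / (1 - e * Real.cos (θ t)) := by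
    intro t
    have hD : 0 < 1 - e * Real.cos (θ t) := by
      nlinarith [Real.cos_le_one (θ t)]
    have hx0 := congrFun (hx t) 0
    have hx1 := congrFun (hx t) 1
    have hy0 := congrFun (hy t) 0
    have hy1 := congrFun (hy t) 1
    simp only [Pi.smul_apply, Matrix.cons_val_zero, Matrix.cons_val_one, smul_eq_mul] at hx0 hx1 hy0 hy1
    have hR : 0 ≤ (1 - e) * r₀ / (1 - e * Real.cos (θ t)) :=
      div_nonneg (mul_nonneg (by linarith) hr₀.le) hD.le
    rw [EuclideanSpace.norm_eq, ← Real.sqrt_sq hR]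
    congr 1
    simp only [Fin.sum_univ_two, PiLp.sub_apply, Real.norm_eq_abs, sq_abs]
    rw [hx0, hx1, hy0, hy1]
    have h := Real.sin_sq_add_cos_sq (θ t)
    have e1 : ∀ a : ℝ, -((1 - e) * μ * r₀ / (1 - e * Real.cos (θ t))) * a
        - (1 - e) * (1 - μ) * r₀ / (1 - e * Real.cos (θ t)) * a
        = -((1 - e) * r₀ / (1 - e * Real.cos (θ t))) * a := by
      intro a; ring
    rw [e1, e1]
    linear_combination ((1 - e) * r₀ / (1 - e * Real.cos (θ t))) ^ 2 * h
  refine ⟨fun t => ?_, ?_⟩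
  · have hD : 0 < 1 - e * Real.cos (θ t) := by
      nlinarith [Real.cos_le_one (θ t)]
    have h1 := Real.cos_le_one (θ t)
    have h2 := Real.neg_one_le_cos (θ t)
    rw [key]
    constructor
    · apply div_le_div_of_nonneg_left (mul_nonneg (by linarith) hr₀.le) hD
      nlinarith
    · rw [div_le_iff₀ hD, mul_comm]
      apply mul_le_mul_of_nonneg_left _ hr₀.le
      nlinarith
  · rw [key, hθ0, Real.cos_zero, mul_one]
    have : 1 - e ≠ 0 := by linarith
    field_simp
end

section
/- The function θ is strictly increasing on ℝ and is surjective onto ℝ (in particular θ(t) → +∞ as t → +∞ and θ(t) → −∞ as t → −∞). -/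
open Filter

/-- The solution `θ` of the angular ODE is strictly increasing and surjective onto `ℝ`;
in particular `θ(t) → +∞` as `t → +∞` and `θ(t) → -∞` as `t → -∞`. -/
theorem angular_ode_strictMono_surjective (c e : ℝ) (hc : 0 < c) (he₀ : 0 < e) (he₁ : e < 1)
    (θ : ℝ → ℝ) (hθdiff : Differentiable ℝ θ)
    (hθ' : ∀ t, deriv θ t = c * (1 - e * Real.cos (θ t)) ^ 2)
    (hθ0 : θ 0 = 0) :
    StrictMono θ ∧ Function.Surjective θ ∧
      Tendsto θ atTop atTop ∧ Tendsto θ atBot atBot := by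
  have hk : 0 < c * (1 - e) ^ 2 := by
    have : 0 < 1 - e := by linarith
    positivity
  have hge : ∀ t, c * (1 - e) ^ 2 ≤ deriv θ t := by
    intro t
    rw [hθ']
    have h1 : 1 - e ≤ 1 - e * Real.cos (θ t) := by
      nlinarith [Real.cos_le_one (θ t)]
    have h0 : 0 ≤ 1 - e := by linarith
    gcongr
  have hmono : StrictMono θ := strictMono_of_deriv_pos fun t => lt_of_lt_of_le hk (hge t)
  have hmvt : ∀ x y, x ≤ y → c * (1 - e) ^ 2 * (y - x) ≤ θ y - θ x := fun x y hxy =>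
    mul_sub_le_image_sub_of_le_deriv hθdiff hge hxy
  have htop : Tendsto θ atTop atTop := by
    refine tendsto_atTop_mono' atTop ?_ (tendsto_id.const_mul_atTop hk)
    filter_upwards [eventually_ge_atTop 0] with t ht
    have := hmvt 0 t ht
    simp only [id]
    linarith
  have hbot : Tendsto θ atBot atBot := by
    refine tendsto_atBot_mono' atBot ?_ (tendsto_id.const_mul_atBot hk)
    filter_upwards [eventually_le_atBot 0] with t ht
    have := hmvt t 0 ht
    simp only [id]
    linarith
  exact ⟨hmono, hθdiff.continuous.surjective htop hbot, htop, hbot⟩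
end

section
/- Setting T = 2π √( r₀³ / (G(1+e)³(m₁+m₂)) ), the solution θ of the angular ODE satisfies θ(t + T) = θ(t) + 2π for all t ∈ ℝ. -/
open Real

lemma arctan_part (b x : ℝ) (hb0 : 0 < b) (hb1 : b < 1) :
    HasDerivAt (fun x => x + 2 * Real.arctan (b * Real.sin x / (1 - b * Real.cos x)))
      ((1 - b ^ 2) / (1 + b ^ 2 - 2 * b * Real.cos x)) x := by
  have h1 : 0 < 1 - b * Real.cos x := by nlinarith [Real.cos_le_one x]
  have h2 : 0 < 1 + b ^ 2 - 2 * b * Real.cos x := by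
    nlinarith [Real.cos_le_one x, sq_nonneg (1 - b), mul_pos hb0 hb0, sq_pos_of_pos (sub_pos.2 hb1)]
  have hs := ((Real.hasDerivAt_sin x).const_mul b).div
    (((Real.hasDerivAt_cos x).const_mul b).const_sub 1) h1.ne'
  have h := (hasDerivAt_id x).add ((hs.arctan).const_mul 2)
  refine h.congr_deriv ?_
  have e1 : 1 + (b * Real.sin x / (1 - b * Real.cos x)) ^ 2
      = (1 + b ^ 2 - 2 * b * Real.cos x) / (1 - b * Real.cos x) ^ 2 := by
    field_simp
    linear_combination b ^ 2 * Real.sin_sq_add_cos_sq x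
  have e2 : b * Real.cos x * (1 - b * Real.cos x) - b * Real.sin x * -(b * -Real.sin x)
      = b * Real.cos x - b ^ 2 := by
    linear_combination (- b ^ 2) * Real.sin_sq_add_cos_sq x
  simp only [Pi.div_apply]
  rw [e1, e2]
  field_simp
  ring

lemma exists_prim (e s : ℝ) (he0 : 0 < e) (he1 : e < 1) (hs0 : 0 < s) (hs : s ^ 2 = 1 - e ^ 2) :
    ∃ F : ℝ → ℝ, (∀ x, HasDerivAt F (1 / (1 - e * Real.cos x) ^ 2) x) ∧
      ∀ x, F (x + 2 * π) = F x + 2 * π / s ^ 3 := by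
  set b := e / (1 + s) with hb
  have hb0 : 0 < b := by positivity
  have hb1 : b < 1 := by
    rw [hb, div_lt_one (by positivity)]; linarith
  have hbe : b * (1 + s) = e := by rw [hb]; field_simp
  have hb2 : b ^ 2 * (1 + s) = 1 - s := by
    have : (1 + s) * (b ^ 2 * (1 + s)) = (1 + s) * (1 - s) := by
      linear_combination (b * (1 + s) + e) * hbe + hs
    exact mul_left_cancel₀ (by positivity) this
  refine ⟨fun x => 1 / s ^ 2 * (1 / s * (x + 2 * Real.arctan (b * Real.sin x / (1 - b * Real.cos x)))
    + e * Real.sin x / (1 - e * Real.cos x)), fun x => ?_, fun x => ?_⟩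
  · have h1 : 0 < 1 - e * Real.cos x := by nlinarith [Real.cos_le_one x]
    have hd := ((Real.hasDerivAt_sin x).const_mul e).div
      (((Real.hasDerivAt_cos x).const_mul e).const_sub 1) h1.ne'
    have h := (((arctan_part b x hb0 hb1).const_mul (1 / s)).add hd).const_mul (1 / s ^ 2)
    refine h.congr_deriv ?_
    have e2 : e * Real.cos x * (1 - e * Real.cos x) - e * Real.sin x * -(e * -Real.sin x)
        = e * Real.cos x - e ^ 2 := by
      linear_combination (- e ^ 2) * Real.sin_sq_add_cos_sq x
    have h2 : 0 < 1 + b ^ 2 - 2 * b * Real.cos x := by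
      nlinarith [Real.cos_le_one x, sq_pos_of_pos (sub_pos.2 hb1)]
    have e3 : (1 - b ^ 2) / (1 + b ^ 2 - 2 * b * Real.cos x) = s / (1 - e * Real.cos x) := by
      rw [div_eq_div_iff h2.ne' h1.ne']
      have h3 : (1 + s) ≠ 0 := by positivity
      apply mul_left_cancel₀ h3
      linear_combination (-(1 - e * Real.cos x) - s) * hb2 + 2 * s * Real.cos x * hbe
    rw [e2, e3]
    field_simp
    linear_combination -hs
  · simp only [Real.sin_add_two_pi, Real.cos_add_two_pi]
    field_simp
    ring

/-- With `T = 2π √(r₀³/(G(1+e)³(m₁+m₂)))`, the solution of the angular ODE satisfies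
`θ(t + T) = θ(t) + 2π` for all `t`. -/
theorem angular_ode_period
    (G r₀ m₁ m₂ e : ℝ) (hG : 0 < G) (hr₀ : 0 < r₀) (hm₁ : 0 < m₁) (hm₂ : 0 < m₂)
    (he₀ : 0 < e) (he₁ : e < 1)
    (c : ℝ) (hc : c = Real.sqrt (G * (m₁ + m₂) / ((1 - e) ^ 3 * r₀ ^ 3)))
    (θ : ℝ → ℝ) (hθdiff : Differentiable ℝ θ)
    (hθ' : ∀ t, deriv θ t = c * (1 - e * Real.cos (θ t)) ^ 2)
    (hθ0 : θ 0 = 0)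
    (T : ℝ) (hT : T = 2 * π * Real.sqrt (r₀ ^ 3 / (G * (1 + e) ^ 3 * (m₁ + m₂)))) :
    ∀ t : ℝ, θ (t + T) = θ t + 2 * π := by
  have h1e : 0 < 1 - e := by linarith
  have hM : 0 < m₁ + m₂ := by positivity
  have hpos : 0 < 1 - e ^ 2 := by nlinarith
  have hs0 : 0 < Real.sqrt (1 - e ^ 2) := Real.sqrt_pos.2 hpos
  have hs : Real.sqrt (1 - e ^ 2) ^ 2 = 1 - e ^ 2 := Real.sq_sqrt hpos.le
  generalize Real.sqrt (1 - e ^ 2) = s at hs0 hs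
  obtain ⟨F, hF, hFp⟩ := exists_prim e s he₀ he₁ hs0 hs
  have hd : ∀ x, 0 < 1 - e * Real.cos x := fun x => by nlinarith [Real.cos_le_one x]
  have hmono : StrictMono F := by
    apply strictMono_of_deriv_pos
    intro x
    rw [(hF x).deriv]
    have := hd x
    positivity
  have hcT : c * T = 2 * π / s ^ 3 := by
    have : Real.sqrt (G * (m₁ + m₂) / ((1 - e) ^ 3 * r₀ ^ 3)) *
        Real.sqrt (r₀ ^ 3 / (G * (1 + e) ^ 3 * (m₁ + m₂))) = 1 / s ^ 3 := by
      rw [← Real.sqrt_mul (by positivity), Real.sqrt_eq_iff_mul_self_eq (by positivity) (by positivity)]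
      have h6 : 1 / s ^ 3 * (1 / s ^ 3) = 1 / ((1 - e) ^ 3 * (1 + e) ^ 3) := by
        rw [← mul_pow, show (1 - e) * (1 + e) = s ^ 2 by rw [hs]; ring]
        field_simp
      rw [h6]
      field_simp
    rw [hc, hT]
    linear_combination 2 * π * this
  have hlin : ∀ t, F (θ t) - c * t = F (θ 0) - c * 0 := by
    have hder : ∀ t, HasDerivAt (fun t => F (θ t) - c * t) 0 t := by
      intro t
      have h1 := (hF (θ t)).comp t (hθdiff t).hasDerivAt
      have h2 := h1.sub ((hasDerivAt_id t).const_mul c)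
      refine h2.congr_deriv ?_
      rw [hθ']
      have := hd (θ t)
      field_simp
      ring
    intro t
    exact is_const_of_deriv_eq_zero (fun t => (hder t).differentiableAt) (fun t => (hder t).deriv) t 0
  intro t
  apply hmono.injective
  rw [hFp, ← hcT]
  linear_combination hlin (t + T) - hlin t
end

section
/- Setting T = 2π √( r₀³ / (G(1+e)³(m₁+m₂)) ), the two-body motion is periodic with period T: for every t ∈ ℝ, x(t + T) = x(t) and y(t + T) = y(t). -/
open Real

lemma F_deriv (b : ℝ) (hb0 : 0 < b) (hb1 : b < 1) (u : ℝ) :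
    HasDerivAt (fun u : ℝ => u + 2 * Real.arctan (b * Real.sin u / (1 - b * Real.cos u))
      + (2 * b / (1 + b ^ 2)) * ((1 - b ^ 2) / (1 + b ^ 2)) *
        (Real.sin u / (1 - (2 * b / (1 + b ^ 2)) * Real.cos u)))
      (((1 - b ^ 2) / (1 + b ^ 2)) ^ 3 / (1 - (2 * b / (1 + b ^ 2)) * Real.cos u) ^ 2) u := by
  have hc1 := Real.cos_le_one u
  have hc2 := Real.neg_one_le_cos u
  have hD1 : 0 < 1 - b * Real.cos u := by nlinarith
  have hD2 : 0 < 1 + b ^ 2 - 2 * b * Real.cos u := by nlinarith [sq_pos_of_pos (sub_pos.2 hb1)]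
  have hp : 0 < 1 + b ^ 2 := by positivity
  have hD3e : 1 - (2 * b / (1 + b ^ 2)) * Real.cos u
      = (1 + b ^ 2 - 2 * b * Real.cos u) / (1 + b ^ 2) := by field_simp
  have hD3 : 0 < 1 - (2 * b / (1 + b ^ 2)) * Real.cos u := by rw [hD3e]; positivity
  have hs := Real.hasDerivAt_sin u
  have hco := Real.hasDerivAt_cos u
  have h1 := (hs.const_mul b).div ((hco.const_mul b).const_sub 1) hD1.ne'
  have h2 := hs.div ((hco.const_mul (2 * b / (1 + b ^ 2))).const_sub 1) hD3.ne'
  have h3 := ((hasDerivAt_id u).add (h1.arctan.const_mul 2)).add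
    (h2.const_mul ((2 * b / (1 + b ^ 2)) * ((1 - b ^ 2) / (1 + b ^ 2))))
  refine h3.congr_deriv ?_
  have hsc : Real.sin u ^ 2 = 1 - Real.cos u ^ 2 := by linarith [Real.sin_sq_add_cos_sq u]
  have e1 : 1 / (1 + (b * Real.sin u / (1 - b * Real.cos u)) ^ 2)
      = (1 - b * Real.cos u) ^ 2 / (1 + b ^ 2 - 2 * b * Real.cos u) := by
    have : 1 + (b * Real.sin u / (1 - b * Real.cos u)) ^ 2
      = (1 + b ^ 2 - 2 * b * Real.cos u) / (1 - b * Real.cos u) ^ 2 := by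
      rw [div_pow, mul_pow, hsc]
      field_simp
      ring
    rw [this, one_div_div]
  have e2 : b * Real.cos u * (1 - b * Real.cos u) - b * Real.sin u * -(b * -Real.sin u)
      = b * (Real.cos u - b) := by linear_combination (-b ^ 2) * hsc
  have e3 : Real.cos u * (1 - (2 * b / (1 + b ^ 2)) * Real.cos u)
      - Real.sin u * -((2 * b / (1 + b ^ 2)) * -Real.sin u)
      = Real.cos u - 2 * b / (1 + b ^ 2) := by linear_combination (-(2 * b / (1 + b ^ 2))) * hsc
  simp only [Pi.div_apply, e1, e2, e3]
  rw [hD3e]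
  generalize Real.cos u = k at *
  have := hD1.ne'
  have := hD2.ne'
  field_simp
  ring

theorem two_body_periodic
    (G r₀ m₁ m₂ e : ℝ) (hG : 0 < G) (hr₀ : 0 < r₀) (hm₁ : 0 < m₁) (hm₂ : 0 < m₂)
    (he₀ : 0 < e) (he₁ : e < 1)
    (c μ : ℝ)
    (hc : c = Real.sqrt (G * (m₁ + m₂) / ((1 - e) ^ 3 * r₀ ^ 3)))
    (hμ : μ = m₂ / (m₁ + m₂))
    (θ : ℝ → ℝ) (hθdiff : Differentiable ℝ θ)
    (hθ' : ∀ t, deriv θ t = c * (1 - e * Real.cos (θ t)) ^ 2)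
    (hθ0 : θ 0 = 0)
    (x y : ℝ → EuclideanSpace ℝ (Fin 2))
    (hx : ∀ t, x t =
      (-((1 - e) * μ * r₀ / (1 - e * Real.cos (θ t)))) • ![Real.cos (θ t), Real.sin (θ t)])
    (hy : ∀ t, y t =
      ((1 - e) * (1 - μ) * r₀ / (1 - e * Real.cos (θ t))) • ![Real.cos (θ t), Real.sin (θ t)]) :
    ∀ t : ℝ, x (t + 2 * Real.pi * Real.sqrt (r₀ ^ 3 / (G * (1 + e) ^ 3 * (m₁ + m₂)))) = x t ∧
      y (t + 2 * Real.pi * Real.sqrt (r₀ ^ 3 / (G * (1 + e) ^ 3 * (m₁ + m₂)))) = y t := by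
  have hM : 0 < m₁ + m₂ := by positivity
  have h1e : 0 < 1 - e := by linarith
  have h1e' : 0 < 1 + e := by linarith
  obtain ⟨b, hb0, hb1, hbe⟩ : ∃ b : ℝ, 0 < b ∧ b < 1 ∧ e = 2 * b / (1 + b ^ 2) := by
    have hq : 0 < 1 - e ^ 2 := by nlinarith
    have hs0 := Real.sqrt_pos.2 hq
    have hs := Real.sq_sqrt hq.le
    set s := Real.sqrt (1 - e ^ 2)
    refine ⟨e / (1 + s), by positivity, ?_, ?_⟩
    · rw [div_lt_one (by positivity)]; linarith
    · field_simp
      nlinarith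
  set T := 2 * Real.pi * Real.sqrt (r₀ ^ 3 / (G * (1 + e) ^ 3 * (m₁ + m₂))) with hT
  have hp : 0 < 1 + b ^ 2 := by positivity
  have hm : 0 < 1 - b ^ 2 := by nlinarith
  obtain ⟨s, hsdef⟩ : ∃ s, s = (1 - b ^ 2) / (1 + b ^ 2) := ⟨_, rfl⟩
  have hs0 : 0 < s := by rw [hsdef]; positivity
  have hse : s ^ 2 = (1 - e) * (1 + e) := by
    rw [hsdef, hbe]; field_simp; ring
  have hF := F_deriv b hb0 hb1
  rw [← hbe, ← hsdef] at hF
  set F : ℝ → ℝ := fun u : ℝ => u + 2 * Real.arctan (b * Real.sin u / (1 - b * Real.cos u))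
      + e * s * (Real.sin u / (1 - e * Real.cos u)) with hFdef
  have hD : ∀ u, 0 < 1 - e * Real.cos u := fun u => by nlinarith [Real.cos_le_one u]
  have hmono : StrictMono F := by
    apply strictMono_of_deriv_pos
    intro u
    rw [(hF u).deriv]
    have := hD u
    positivity
  have hper : ∀ u, F (u + 2 * Real.pi) = F u + 2 * Real.pi := by
    intro u
    simp only [hFdef, Real.sin_add_two_pi, Real.cos_add_two_pi]
    ring
  have hH : ∀ t, HasDerivAt (fun t => F (θ t) - s ^ 3 * c * t) 0 t := by
    intro t
    have h1 := (hθdiff t).hasDerivAt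
    rw [hθ' t] at h1
    have h2 := ((hF (θ t)).comp t h1).sub ((hasDerivAt_id t).const_mul (s ^ 3 * c))
    refine h2.congr_deriv ?_
    have := (hD (θ t)).ne'
    field_simp
    ring
  have hconst : ∀ a b', F (θ a) - s ^ 3 * c * a = F (θ b') - s ^ 3 * c * b' := fun a b' =>
    is_const_of_deriv_eq_zero (fun t => (hH t).differentiableAt) (fun t => (hH t).deriv) a b'
  have hcT : s ^ 3 * c * T = 2 * Real.pi := by
    have h1 : c * Real.sqrt (r₀ ^ 3 / (G * (1 + e) ^ 3 * (m₁ + m₂))) = 1 / s ^ 3 := by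
      rw [hc, ← Real.sqrt_mul (by positivity), Real.sqrt_eq_iff_eq_sq (by positivity) (by positivity)]
      have : (1 / s ^ 3) ^ 2 = 1 / ((1 - e) * (1 + e)) ^ 3 := by
        rw [← hse]; ring
      rw [this]
      field_simp
    rw [hT]
    calc _ = 2 * Real.pi * (s ^ 3 * (c * Real.sqrt (r₀ ^ 3 / (G * (1 + e) ^ 3 * (m₁ + m₂))))) := by ring
      _ = _ := by rw [h1]; field_simp
  intro t
  have key : θ (t + T) = θ t + 2 * Real.pi := by
    apply hmono.injective
    rw [hper]
    linear_combination hconst (t + T) t + hcT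
  constructor <;> apply WithLp.ofLp_injective
  · rw [hx, hx, key, Real.cos_add_two_pi, Real.sin_add_two_pi]
  · rw [hy, hy, key, Real.cos_add_two_pi, Real.sin_add_two_pi]
end

section
/- In normalized units (G = 1, m₁ + m₂ = 1, r₀ = 1), i.e. when θ satisfies θ'(t) = (1−e)^{−3/2}(1 − e·cos θ(t))², the solution satisfies θ(t + 2π(1+e)^{−3/2}) = θ(t) + 2π for all t ∈ ℝ; that is, the period of the motion equals 2π/(1+e)^{3/2}. -/
open Real

theorem aux_arctan (e s x : ℝ) (he₀ : 0 < e) (he₁ : e < 1) (hs : 0 < s) (hse : s ^ 2 = 1 - e ^ 2) :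
    HasDerivAt (fun x => arctan (e * sin x / (1 + s - e * cos x)))
      ((e * cos x - 1 + s) / (2 * (1 - e * cos x))) x := by
  have hD : 0 < 1 - e * cos x := by nlinarith [cos_le_one x]
  have hB : 0 < 1 + s - e * cos x := by linarith
  have h1 : HasDerivAt (fun x => e * sin x) (e * cos x) x := (hasDerivAt_sin x).const_mul e
  have h2 : HasDerivAt (fun x => 1 + s - e * cos x) (-(e * (-sin x))) x :=
    ((hasDerivAt_cos x).const_mul e).const_sub (1 + s)
  have h := (h1.div h2 hB.ne').arctan
  refine h.congr_deriv ?_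
  have hsc := sin_sq_add_cos_sq x
  have key : (1 + s - e * cos x) ^ 2 + (e * sin x) ^ 2 = 2 * (1 + s) * (1 - e * cos x) := by
    have : (sin x) ^ 2 = 1 - cos x ^ 2 := by linarith
    rw [mul_pow, this]; linear_combination hse
  have e1 : 1 + (e * sin x / (1 + s - e * cos x)) ^ 2
      = 2 * (1 + s) * (1 - e * cos x) / (1 + s - e * cos x) ^ 2 := by
    rw [← key]; field_simp
  have e2 : e * cos x * (1 + s - e * cos x) - e * sin x * -(e * -sin x)
      = (1 + s) * (e * cos x - 1 + s) := by
    linear_combination (-e ^ 2) * hsc - hse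
  simp only [Pi.div_apply]
  rw [e1, e2]
  field_simp

theorem aux_F (e s x : ℝ) (he₀ : 0 < e) (he₁ : e < 1) (hs : 0 < s) (hse : s ^ 2 = 1 - e ^ 2) :
    HasDerivAt (fun x => (x + 2 * arctan (e * sin x / (1 + s - e * cos x))
        + e * s * (sin x / (1 - e * cos x))) / s ^ 3)
      (1 / (1 - e * cos x) ^ 2) x := by
  have hD : 0 < 1 - e * cos x := by nlinarith [cos_le_one x]
  have h2 : HasDerivAt (fun x => 1 - e * cos x) (-(e * (-sin x))) x :=
    ((hasDerivAt_cos x).const_mul e).const_sub 1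
  have h3 := ((hasDerivAt_sin x).div h2 hD.ne').const_mul (e * s)
  have h := (((hasDerivAt_id x).add ((aux_arctan e s x he₀ he₁ hs hse).const_mul 2)).add h3).div_const
    (s ^ 3)
  refine h.congr_deriv ?_
  have hsc := sin_sq_add_cos_sq x
  have e2 : cos x * (1 - e * cos x) - sin x * -(e * -sin x) = cos x - e := by
    linear_combination (-e) * hsc
  rw [e2]
  field_simp
  linear_combination (-s) * hse

/-- In normalized units, the solution of `θ' = (1-e)^{-3/2} (1 - e cos θ)²`, `θ(0) = 0`,
satisfies `θ(t + 2π(1+e)^{-3/2}) = θ(t) + 2π`; the period of the motion is `2π/(1+e)^{3/2}`. -/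
theorem angular_ode_period_normalized (e : ℝ) (he₀ : 0 < e) (he₁ : e < 1)
    (θ : ℝ → ℝ) (hθdiff : Differentiable ℝ θ)
    (hθ' : ∀ t, deriv θ t = (1 - e) ^ (-(3 : ℝ) / 2) * (1 - e * Real.cos (θ t)) ^ 2)
    (hθ0 : θ 0 = 0) :
    ∀ t : ℝ, θ (t + 2 * π * (1 + e) ^ (-(3 : ℝ) / 2)) = θ t + 2 * π := by
  intro t
  have hpos : 0 < 1 - e ^ 2 := by nlinarith
  obtain ⟨s, hs, hse⟩ : ∃ s : ℝ, 0 < s ∧ s ^ 2 = 1 - e ^ 2 :=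
    ⟨√(1 - e ^ 2), Real.sqrt_pos.2 hpos, Real.sq_sqrt hpos.le⟩
  have hF := fun x => aux_F e s x he₀ he₁ hs hse
  set F : ℝ → ℝ := fun x => (x + 2 * arctan (e * sin x / (1 + s - e * cos x))
        + e * s * (sin x / (1 - e * cos x))) / s ^ 3 with hFdef
  have hD : ∀ x, 0 < 1 - e * cos x := fun x => by nlinarith [cos_le_one x]
  have hmono : StrictMono F := by
    apply strictMono_of_deriv_pos
    intro x
    rw [(hF x).deriv]
    have := hD x
    positivity
  have hper : ∀ x, F (x + 2 * π) = F x + 2 * π / s ^ 3 := by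
    intro x
    simp only [hFdef, sin_add_two_pi, cos_add_two_pi]
    ring
  set c : ℝ := (1 - e) ^ (-(3 : ℝ) / 2) with hc
  have hG : ∀ t, HasDerivAt (fun t => F (θ t) - c * t) 0 t := by
    intro t
    have h1 := (hF (θ t)).comp t (hθdiff t).hasDerivAt
    have h2 := h1.sub ((hasDerivAt_id t).const_mul c)
    refine h2.congr_deriv ?_
    rw [hθ' t]
    have := (hD (θ t)).ne'
    field_simp
    ring
  have hconst := is_const_of_deriv_eq_zero (fun t => (hG t).differentiableAt)
    (fun t => (hG t).deriv)
  have hcT : c * (1 + e) ^ (-(3 : ℝ) / 2) = 1 / s ^ 3 := by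
    rw [hc, ← Real.mul_rpow (by linarith) (by linarith),
      show (1 - e) * (1 + e) = s ^ 2 by rw [hse]; ring, ← Real.rpow_natCast s 2,
      ← Real.rpow_mul hs.le, one_div, ← Real.rpow_natCast s 3, ← Real.rpow_neg hs.le]
    norm_num
  apply hmono.injective
  rw [hper]
  have := hconst (t + 2 * π * (1 + e) ^ (-(3 : ℝ) / 2)) t
  linear_combination this + 2 * π * hcT
end

section
/- The relative orbit is an ellipse of eccentricity e: writing (X(t), Y(t)) = y(t) − x(t) ∈ ℝ² and p = (1−e) r₀, one has (1 − e²)·X(t)² − 2 p e·X(t) + Y(t)² = p² for all t ∈ ℝ; equivalently, the relative position lies for all time on the ellipse with semi-major axis a = r₀/(1+e), center (p e/(1−e²), 0), and eccentricity e. -/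
open Real

theorem relative_orbit_is_ellipse
    (G r₀ m₁ m₂ e : ℝ) (hG : 0 < G) (hr₀ : 0 < r₀) (hm₁ : 0 < m₁) (hm₂ : 0 < m₂)
    (he₀ : 0 < e) (he₁ : e < 1)
    (c μ : ℝ)
    (hc : c = Real.sqrt (G * (m₁ + m₂) / ((1 - e) ^ 3 * r₀ ^ 3)))
    (hμ : μ = m₂ / (m₁ + m₂))
    (θ : ℝ → ℝ) (hθdiff : Differentiable ℝ θ)
    (hθ' : ∀ t, deriv θ t = c * (1 - e * Real.cos (θ t)) ^ 2)
    (hθ0 : θ 0 = 0)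
    (x y : ℝ → EuclideanSpace ℝ (Fin 2))
    (hx : ∀ t, x t =
      (-((1 - e) * μ * r₀ / (1 - e * Real.cos (θ t)))) • ![Real.cos (θ t), Real.sin (θ t)])
    (hy : ∀ t, y t =
      ((1 - e) * (1 - μ) * r₀ / (1 - e * Real.cos (θ t))) • ![Real.cos (θ t), Real.sin (θ t)]) :
    ∀ t : ℝ,
      (1 - e ^ 2) * ((y t - x t) 0) ^ 2 - 2 * ((1 - e) * r₀) * e * ((y t - x t) 0) +
        ((y t - x t) 1) ^ 2 = ((1 - e) * r₀) ^ 2 := by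
  intro t
  have hD : 1 - e * Real.cos (θ t) ≠ 0 := by
    have h1 := Real.cos_le_one (θ t)
    nlinarith
  have hs := Real.sin_sq_add_cos_sq (θ t)
  have x0 := congrFun (hx t) 0
  have x1 := congrFun (hx t) 1
  have y0 := congrFun (hy t) 0
  have y1 := congrFun (hy t) 1
  simp only [Pi.smul_apply, smul_eq_mul, Matrix.cons_val_zero, Matrix.cons_val_one] at x0 x1 y0 y1
  have X : (y t - x t) 0 = (1 - e) * r₀ * Real.cos (θ t) / (1 - e * Real.cos (θ t)) := by
    rw [PiLp.sub_apply, x0, y0]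
    ring
  have Y : (y t - x t) 1 = (1 - e) * r₀ * Real.sin (θ t) / (1 - e * Real.cos (θ t)) := by
    rw [PiLp.sub_apply, x1, y1]
    ring
  rw [X, Y, div_pow, div_pow, mul_pow _ (Real.sin (θ t)), Real.sin_sq]
  field_simp
  ring
end
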